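/- arXiv:2211.09914 — 3 statements merged into one kernel-verified Lean document; each statement's English description precedes it below -/
import Mathlib

section
/- (Proposition 1) In the setting below, suppose ℓ ≥ τK₀. There exists ε₀ > 0, depending only on τ, ℓ, M and F (one may take ε₀ = min{1/(2K₂), 1/(τℓK₁)} when K₁ > 0, and ε₀ = 1/(2K₂) when K₁ = 0), such that for every ε with |ε| ≤ ε₀ and every z ∈ C^{0,ℓ}([−3/2,0]) with sup_{[−3/2,0]}|z| ≤ M, the operator O_z maps C^{0,ℓ}_0([0,1/2]) into itself and is a contraction: for all w₁, w₂ ∈ C^{0,ℓ}_0([0,1/2]), d(O_z(w₁), O_z(w₂)) ≤ (1/2) d(w₁, w₂). -/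
/-- The distance `d(f,g) = sup_{t ∈ (0,1/2)} |f'(t) - g'(t)|`. -/
noncomputable def dd (f g : ℝ → ℝ) : ℝ :=
  ⨆ t : Set.Ioo (0 : ℝ) (1 / 2), |deriv f t.1 - deriv g t.1|

/-- `f ∈ C^{0,ℓ}([a,b])`: continuous on `[a,b]`, differentiable on `(a,b)` with `|f'| ≤ ℓ`. -/
def memC (a b ℓ : ℝ) (f : ℝ → ℝ) : Prop :=
  ContinuousOn f (Set.Icc a b) ∧
    ∀ t ∈ Set.Ioo a b, DifferentiableAt ℝ f t ∧ |deriv f t| ≤ ℓ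

/-- `f ∈ C^{0,ℓ}_0([0,1/2])` with prescribed value `c` at `0` and sup-norm bound `K₂`. -/
def mem0 (ℓ K₂ c : ℝ) (f : ℝ → ℝ) : Prop :=
  memC 0 (1 / 2) ℓ f ∧ f 0 = c ∧ ∀ t ∈ Set.Icc (0 : ℝ) (1 / 2), |f t| ≤ K₂

/-- The operator `O_z(w)(t) = z(0) + τ ∫₀ᵗ F (z (s - 1 + ε w s)) ds`. -/
noncomputable def Oz (τ ε : ℝ) (F z w : ℝ → ℝ) : ℝ → ℝ := fun t =>
  z 0 + τ * ∫ s in (0 : ℝ)..t, F (z (s - 1 + ε * w s))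

/-! On `(0, 1/2)` one has `O_z(w)' = τ F(z(t - 1 + ε w))`. The choice `|ε| ≤ 1/(2K₂)` keeps the
deviated argument in `[-3/2, 0]`, where `|z| ≤ M`, so `|O_z(w)'| ≤ τK₀`; integrating from
`|O_z(w)(0)| ≤ M` over a length of at most `1/2` gives the bound `K₂`. For the contraction, the
Lipschitz bounds for `F` and `z` give `|O_z(w₁)' - O_z(w₂)'| ≤ τ K₁ ℓ |ε| |w₁ - w₂| ≤ |w₁ - w₂|`,
and since `w₁` and `w₂` agree at `0`, the length `1/2` of the interval yields the factor `1/2`. -/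

open Set
open scoped NNReal

theorem abs_le_iSup_abs_of_continuousOn {X : Type*} [TopologicalSpace X] {s : Set X} {g : X → ℝ}
    (hs : IsCompact s) (hg : ContinuousOn g s) {x : X} (hx : x ∈ s) :
    |g x| ≤ ⨆ ξ : s, |g ξ| := by
  have hbdd : BddAbove (range fun ξ : s => |g ξ|) := by
    simpa only [image_eq_range] using hs.bddAbove_image hg.abs
  exact le_ciSup hbdd ⟨x, hx⟩

theorem lipschitzOnWith_of_iSup_abs_deriv_le {s : Set ℝ} {K : ℝ≥0} {F : ℝ → ℝ}
    (hs : IsCompact s) (hs_conv : Convex ℝ s) (hF : ContDiff ℝ 1 F)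
    (hK : ⨆ ξ : s, |deriv F ξ| ≤ K) : LipschitzOnWith K F s := by
  have hF' : ContinuousOn (deriv F) s := (hF.continuous_deriv le_rfl).continuousOn
  exact hs_conv.lipschitzOnWith_of_nnnorm_deriv_le (fun x _ => hF.differentiable one_ne_zero x)
    fun x hx => NNReal.coe_le_coe.1 ((abs_le_iSup_abs_of_continuousOn hs hF' hx).trans hK)

theorem hasDerivAt_integral_of_continuousOn_Icc {E : Type*} [NormedAddCommGroup E]
    [NormedSpace ℝ E] [CompleteSpace E] {a b t : ℝ} {g : ℝ → E} (hg : ContinuousOn g (Icc a b))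
    (ht : t ∈ Ioo a b) : HasDerivAt (fun x => ∫ s in a..x, g s) (g t) t := by
  have hg_Ioo : ContinuousOn g (Ioo a b) := hg.mono Ioo_subset_Icc_self
  have hg_int : IntervalIntegrable g MeasureTheory.volume a t :=
    (hg.mono (Icc_subset_Icc_right ht.2.le)).intervalIntegrable_of_Icc ht.1.le
  exact intervalIntegral.integral_hasDerivAt_right hg_int
    (hg_Ioo.stronglyMeasurableAtFilter isOpen_Ioo t ht)
    (hg_Ioo.continuousAt (Ioo_mem_nhds ht.1 ht.2))

namespace memC

variable {a b L L' : ℝ} {f : ℝ → ℝ}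

theorem mono (hf : memC a b L f) (hL : L ≤ L') : memC a b L' f :=
  ⟨hf.1, fun t ht => ⟨(hf.2 t ht).1, (hf.2 t ht).2.trans hL⟩⟩

theorem abs_sub_le (hf : memC a b L f) {x y : ℝ} (hx : x ∈ Icc a b) (hy : y ∈ Icc a b) :
    |f x - f y| ≤ L * |x - y| := by
  wlog hyx : y < x generalizing x y
  · rcases (not_lt.1 hyx).eq_or_lt with rfl | hxy
    · simp
    · simpa only [abs_sub_comm] using this hy hx hxy
  have hsub : Ioo y x ⊆ Ioo a b := Ioo_subset_Ioo hy.1 hx.2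
  obtain ⟨c, hc, hslope⟩ := exists_deriv_eq_slope f hyx
    (hf.1.mono (Icc_subset_Icc hy.1 hx.2))
    (fun t ht => (hf.2 t (hsub ht)).1.differentiableWithinAt)
  have hfxy : f x - f y = deriv f c * (x - y) := by
    rw [hslope, div_mul_cancel₀ _ (sub_pos.2 hyx).ne']
  rw [hfxy, abs_mul]
  exact mul_le_mul_of_nonneg_right (hf.2 c (hsub hc)).2 (abs_nonneg _)

theorem const_add_mul_integral {c τ K : ℝ} {g : ℝ → ℝ} (hτ : 0 ≤ τ)
    (hg : ContinuousOn g (Icc a b)) (hgK : ∀ s ∈ Icc a b, |g s| ≤ K) :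
    memC a b (τ * K) (fun t => c + τ * ∫ s in a..t, g s) := by
  refine ⟨?_, fun t ht => ?_⟩
  · rcases le_or_gt a b with hab | hba
    · have hprim : ContinuousOn (fun t => ∫ s in a..t, g s) (Icc a b) := by
        simpa only [uIcc_of_le hab] using intervalIntegral.continuousOn_primitive_interval'
          (hg.intervalIntegrable_of_Icc hab) left_mem_uIcc
      fun_prop
    · simp [Icc_eq_empty hba.not_ge]
  · have hderiv := ((hasDerivAt_integral_of_continuousOn_Icc hg ht).const_mul τ).const_add c
    refine ⟨hderiv.differentiableAt, ?_⟩
    rw [hderiv.deriv, abs_mul, abs_of_nonneg hτ]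
    exact mul_le_mul_of_nonneg_left (hgK t (Ioo_subset_Icc_self ht)) hτ

theorem abs_le_add_mul_length (hf : memC a b L f) (hL : 0 ≤ L) {t : ℝ} (ht : t ∈ Icc a b) :
    |f t| ≤ |f a| + L * (b - a) := by
  have ha : a ∈ Icc a b := left_mem_Icc.2 (ht.1.trans ht.2)
  calc |f t| ≤ |f a| + |f t - f a| := by linarith [abs_sub_abs_le_abs_sub (f t) (f a)]
    _ ≤ |f a| + L * |t - a| := by gcongr; exact hf.abs_sub_le ht ha
    _ ≤ |f a| + L * (b - a) := by
      rw [abs_of_nonneg (sub_nonneg.2 ht.1)]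
      gcongr
      exact ht.2

end memC

section Distance

variable {L₁ L₂ : ℝ} {f g : ℝ → ℝ}

theorem dd_nonneg (f g : ℝ → ℝ) : 0 ≤ dd f g :=
  Real.iSup_nonneg fun _ => abs_nonneg _

theorem dd_le {C : ℝ} (h : ∀ t ∈ Ioo (0 : ℝ) (1 / 2), |deriv f t - deriv g t| ≤ C) :
    dd f g ≤ C := by
  have : Nonempty (Ioo (0 : ℝ) (1 / 2)) := nonempty_Ioo_subtype (by norm_num)
  exact ciSup_le fun t => h t t.2

theorem abs_deriv_sub_deriv_le_dd (hf : memC 0 (1 / 2) L₁ f) (hg : memC 0 (1 / 2) L₂ g)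
    {t : ℝ} (ht : t ∈ Ioo (0 : ℝ) (1 / 2)) : |deriv f t - deriv g t| ≤ dd f g := by
  have hbdd : BddAbove (range fun s : Ioo (0 : ℝ) (1 / 2) => |deriv f s - deriv g s|) := by
    refine ⟨L₁ + L₂, ?_⟩
    rintro _ ⟨s, rfl⟩
    exact (abs_sub _ _).trans (add_le_add (hf.2 s s.2).2 (hg.2 s s.2).2)
  exact le_ciSup hbdd ⟨t, ht⟩

theorem memC.sub (hf : memC 0 (1 / 2) L₁ f) (hg : memC 0 (1 / 2) L₂ g) :
    memC 0 (1 / 2) (dd f g) (f - g) := by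
  refine ⟨hf.1.sub hg.1, fun t ht => ⟨(hf.2 t ht).1.sub (hg.2 t ht).1, ?_⟩⟩
  rw [deriv_sub (hf.2 t ht).1 (hg.2 t ht).1]
  exact abs_deriv_sub_deriv_le_dd hf hg ht

theorem abs_sub_le_half_dd (hf : memC 0 (1 / 2) L₁ f) (hg : memC 0 (1 / 2) L₂ g)
    (h0 : f 0 = g 0) {t : ℝ} (ht : t ∈ Icc (0 : ℝ) (1 / 2)) :
    |f t - g t| ≤ 1 / 2 * dd f g := by
  have h := (hf.sub hg).abs_le_add_mul_length (dd_nonneg f g) ht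
  simp only [Pi.sub_apply, h0, sub_self, abs_zero, zero_add, sub_zero] at h
  rwa [mul_comm]

end Distance

/-- The history `z` evaluated at the deviated argument `s - 1 + ε w(s)`, so that
`O_z(w)' = τ F ∘ delayedHistory ε z w`. -/
def delayedHistory (ε : ℝ) (z w : ℝ → ℝ) (s : ℝ) : ℝ := z (s - 1 + ε * w s)

section Operator

variable {τ ε M ℓ K₀ K₂ c t : ℝ} {K₁ : ℝ≥0} {F z w w₁ w₂ : ℝ → ℝ}

theorem deviated_arg_mem_Icc {v : ℝ} (hε : |ε| * K₂ ≤ 1 / 2) (hv : |v| ≤ K₂)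
    (ht : t ∈ Icc (0 : ℝ) (1 / 2)) : t - 1 + ε * v ∈ Icc (-(3 / 2) : ℝ) 0 := by
  have hεv : |ε * v| ≤ 1 / 2 := by
    rw [abs_mul]
    exact (mul_le_mul_of_nonneg_left hv (abs_nonneg ε)).trans hε
  obtain ⟨hlower, hupper⟩ := abs_le.1 hεv
  constructor <;> linarith [ht.1, ht.2]

theorem mapsTo_delayedHistory (hε : |ε| * K₂ ≤ 1 / 2)
    (hzM : ∀ t ∈ Icc (-(3 / 2) : ℝ) 0, |z t| ≤ M)
    (hw : ∀ t ∈ Icc (0 : ℝ) (1 / 2), |w t| ≤ K₂) :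
    MapsTo (delayedHistory ε z w) (Icc 0 (1 / 2)) (Icc (-M) M) :=
  fun t ht => abs_le.1 (hzM _ (deviated_arg_mem_Icc hε (hw t ht) ht))

theorem continuousOn_delayedHistory (hε : |ε| * K₂ ≤ 1 / 2)
    (hz : ContinuousOn z (Icc (-(3 / 2)) 0)) (hw : mem0 ℓ K₂ c w) :
    ContinuousOn (delayedHistory ε z w) (Icc 0 (1 / 2)) := by
  have hw_cont : ContinuousOn w (Icc 0 (1 / 2)) := hw.1.1
  exact hz.comp (by fun_prop) fun t ht => deviated_arg_mem_Icc hε (hw.2.2 t ht) ht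

theorem abs_delayedHistory_sub_le (hε : |ε| * K₂ ≤ 1 / 2) (hz : memC (-(3 / 2)) 0 ℓ z)
    (ht : t ∈ Icc (0 : ℝ) (1 / 2)) (hw₁ : |w₁ t| ≤ K₂) (hw₂ : |w₂ t| ≤ K₂) :
    |delayedHistory ε z w₁ t - delayedHistory ε z w₂ t| ≤ ℓ * (|ε| * |w₁ t - w₂ t|) := by
  have h := hz.abs_sub_le (deviated_arg_mem_Icc hε hw₁ ht) (deviated_arg_mem_Icc hε hw₂ ht)
  rwa [add_sub_add_left_eq_sub, ← mul_sub, abs_mul] at h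

theorem continuousOn_comp_delayedHistory (hF : ContinuousOn F (Icc (-M) M))
    (hε : |ε| * K₂ ≤ 1 / 2) (hz : ContinuousOn z (Icc (-(3 / 2)) 0))
    (hzM : ∀ t ∈ Icc (-(3 / 2) : ℝ) 0, |z t| ≤ M) (hw : mem0 ℓ K₂ c w) :
    ContinuousOn (F ∘ delayedHistory ε z w) (Icc 0 (1 / 2)) :=
  hF.comp (continuousOn_delayedHistory hε hz hw) (mapsTo_delayedHistory hε hzM hw.2.2)

theorem deriv_Oz (hF : ContinuousOn F (Icc (-M) M)) (hε : |ε| * K₂ ≤ 1 / 2)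
    (hz : ContinuousOn z (Icc (-(3 / 2)) 0)) (hzM : ∀ t ∈ Icc (-(3 / 2) : ℝ) 0, |z t| ≤ M)
    (hw : mem0 ℓ K₂ c w) (ht : t ∈ Ioo (0 : ℝ) (1 / 2)) :
    deriv (Oz τ ε F z w) t = τ * F (delayedHistory ε z w t) :=
  (((hasDerivAt_integral_of_continuousOn_Icc
    (continuousOn_comp_delayedHistory hF hε hz hzM hw) ht).const_mul τ).const_add (z 0)).deriv

theorem mem0_Oz (hτ : 0 ≤ τ) (hF : ContinuousOn F (Icc (-M) M))
    (hFK₀ : ∀ x ∈ Icc (-M) M, |F x| ≤ K₀) (hℓ : τ * K₀ ≤ ℓ)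
    (hK₂ : K₂ = M + τ * K₀ / 2) (hε : |ε| * K₂ ≤ 1 / 2)
    (hz : ContinuousOn z (Icc (-(3 / 2)) 0)) (hzM : ∀ t ∈ Icc (-(3 / 2) : ℝ) 0, |z t| ≤ M)
    (hw : mem0 ℓ K₂ c w) : mem0 ℓ K₂ (z 0) (Oz τ ε F z w) := by
  have hO : memC 0 (1 / 2) (τ * K₀) (Oz τ ε F z w) :=
    memC.const_add_mul_integral hτ (continuousOn_comp_delayedHistory hF hε hz hzM hw)
      fun s hs => hFK₀ _ (mapsTo_delayedHistory hε hzM hw.2.2 hs)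
  have hO0 : Oz τ ε F z w 0 = z 0 := by simp [Oz]
  refine ⟨hO.mono hℓ, hO0, fun t ht => ?_⟩
  have hz0 : |z 0| ≤ M := hzM 0 (by norm_num)
  have hK₀ : 0 ≤ K₀ := (abs_nonneg _).trans (hFK₀ _ (abs_le.1 hz0))
  have hOt := hO.abs_le_add_mul_length (mul_nonneg hτ hK₀) ht
  rw [hO0] at hOt
  linarith

theorem dd_Oz_le (hτ : 0 ≤ τ) (hF : LipschitzOnWith K₁ F (Icc (-M) M))
    (hε : |ε| * K₂ ≤ 1 / 2) (hε₁ : τ * ℓ * K₁ * |ε| ≤ 1) (hz : memC (-(3 / 2)) 0 ℓ z)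
    (hzM : ∀ t ∈ Icc (-(3 / 2) : ℝ) 0, |z t| ≤ M) (hw₁ : mem0 ℓ K₂ c w₁)
    (hw₂ : mem0 ℓ K₂ c w₂) :
    dd (Oz τ ε F z w₁) (Oz τ ε F z w₂) ≤ 1 / 2 * dd w₁ w₂ := by
  refine dd_le fun t ht => ?_
  have ht' : t ∈ Icc (0 : ℝ) (1 / 2) := Ioo_subset_Icc_self ht
  rw [deriv_Oz hF.continuousOn hε hz.1 hzM hw₁ ht, deriv_Oz hF.continuousOn hε hz.1 hzM hw₂ ht,
    ← mul_sub, abs_mul, abs_of_nonneg hτ]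
  calc τ * |F (delayedHistory ε z w₁ t) - F (delayedHistory ε z w₂ t)|
      ≤ τ * (K₁ * |delayedHistory ε z w₁ t - delayedHistory ε z w₂ t|) := by
        gcongr
        exact hF.dist_le_mul _ (mapsTo_delayedHistory hε hzM hw₁.2.2 ht') _
          (mapsTo_delayedHistory hε hzM hw₂.2.2 ht')
    _ ≤ τ * (K₁ * (ℓ * (|ε| * |w₁ t - w₂ t|))) := by
        gcongr
        exact abs_delayedHistory_sub_le hε hz ht' (hw₁.2.2 t ht') (hw₂.2.2 t ht')
    _ = τ * ℓ * K₁ * |ε| * |w₁ t - w₂ t| := by ring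
    _ ≤ |w₁ t - w₂ t| := mul_le_of_le_one_left (abs_nonneg _) hε₁
    _ ≤ 1 / 2 * dd w₁ w₂ := abs_sub_le_half_dd hw₁.1 hw₂.1 (hw₁.2.1.trans hw₂.2.1.symm) ht'

end Operator

/-- The threshold `ε₀` for the deviation parameter `ε`. The case distinction is there because
`1 / (τ * ℓ * K₁)` is `0`, rather than `∞`, when `K₁ = 0`. -/
noncomputable def deviationThreshold (τ ℓ K₁ K₂ : ℝ) : ℝ :=
  if 0 < K₁ then min (1 / (2 * K₂)) (1 / (τ * ℓ * K₁)) else 1 / (2 * K₂)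

section Threshold

variable {τ ℓ K₁ K₂ ε : ℝ}

theorem deviationThreshold_pos (hτ : 0 < τ) (hℓ : 0 < ℓ) (hK₂ : 0 < K₂) :
    0 < deviationThreshold τ ℓ K₁ K₂ := by
  unfold deviationThreshold
  split_ifs with hK₁
  · exact lt_min (by positivity) (by positivity)
  · positivity

theorem abs_mul_le_half_of_abs_le_deviationThreshold (hK₂ : 0 < K₂)
    (hε : |ε| ≤ deviationThreshold τ ℓ K₁ K₂) : |ε| * K₂ ≤ 1 / 2 := by
  have hε₂ : |ε| ≤ 1 / (2 * K₂) := by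
    unfold deviationThreshold at hε
    split_ifs at hε
    · exact hε.trans (min_le_left _ _)
    · exact hε
  rw [le_div_iff₀ (by positivity)] at hε₂
  linarith

theorem mul_abs_le_one_of_abs_le_deviationThreshold (hτ : 0 < τ) (hℓ : 0 < ℓ)
    (hε : |ε| ≤ deviationThreshold τ ℓ K₁ K₂) : τ * ℓ * K₁ * |ε| ≤ 1 := by
  rcases lt_or_ge 0 K₁ with hK₁ | hK₁
  · rw [deviationThreshold, if_pos hK₁] at hε
    have hε₁ := hε.trans (min_le_right _ _)
    rwa [le_div_iff₀' (by positivity)] at hε₁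
  · have hnonpos : τ * ℓ * K₁ * |ε| ≤ 0 :=
      mul_nonpos_of_nonpos_of_nonneg (mul_nonpos_of_nonneg_of_nonpos (by positivity) hK₁)
        (abs_nonneg ε)
    linarith

end Threshold

theorem Oz_contraction_general {τ M ℓ K₀ K₂ : ℝ} {K₁ : ℝ≥0} {F : ℝ → ℝ}
    (hτ : 0 < τ) (hM : 0 < M) (hℓpos : 0 < ℓ)
    (hFK₀ : ∀ x ∈ Icc (-M) M, |F x| ≤ K₀) (hF : LipschitzOnWith K₁ F (Icc (-M) M))
    (hK₂ : K₂ = M + τ * K₀ / 2) (hℓ : τ * K₀ ≤ ℓ) :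
    ∃ ε₀ : ℝ, 0 < ε₀ ∧
      ε₀ = (if 0 < (K₁ : ℝ) then min (1 / (2 * K₂)) (1 / (τ * ℓ * K₁)) else 1 / (2 * K₂)) ∧
      ∀ ε : ℝ, |ε| ≤ ε₀ →
        ∀ z : ℝ → ℝ, memC (-(3 / 2)) 0 ℓ z →
          (∀ t ∈ Icc (-(3 / 2) : ℝ) 0, |z t| ≤ M) →
          (∀ w, mem0 ℓ K₂ (z 0) w → mem0 ℓ K₂ (z 0) (Oz τ ε F z w)) ∧
          ∀ w₁ w₂, mem0 ℓ K₂ (z 0) w₁ → mem0 ℓ K₂ (z 0) w₂ →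
            dd (Oz τ ε F z w₁) (Oz τ ε F z w₂) ≤ (1 / 2) * dd w₁ w₂ := by
  have hK₀ : 0 ≤ K₀ := (abs_nonneg _).trans (hFK₀ 0 ⟨by linarith, hM.le⟩)
  have hK₂pos : 0 < K₂ := by rw [hK₂]; positivity
  refine ⟨deviationThreshold τ ℓ K₁ K₂, deviationThreshold_pos hτ hℓpos hK₂pos, rfl,
    fun ε hε z hz hzM => ?_⟩
  have hε₂ : |ε| * K₂ ≤ 1 / 2 := abs_mul_le_half_of_abs_le_deviationThreshold hK₂pos hε
  have hε₁ : τ * ℓ * K₁ * |ε| ≤ 1 := mul_abs_le_one_of_abs_le_deviationThreshold hτ hℓpos hε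
  exact ⟨fun w hw => mem0_Oz hτ.le hF.continuousOn hFK₀ hℓ hK₂ hε₂ hz.1 hzM hw,
    fun w₁ w₂ hw₁ hw₂ => dd_Oz_le hτ.le hF hε₂ hε₁ hz hzM hw₁ hw₂⟩

/-- Proposition 1: for `ℓ ≥ τK₀` there is `ε₀ > 0` (one may take
`ε₀ = min (1/(2K₂)) (1/(τℓK₁))` when `K₁ > 0` and `ε₀ = 1/(2K₂)` when `K₁ = 0`) such
that for `|ε| ≤ ε₀` and every admissible history `z`, the operator `O_z` maps
`C^{0,ℓ}_0([0,1/2])` into itself and is a `1/2`-contraction for the distance `d`. -/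
theorem Oz_contraction
    (τ M ℓ K₀ K₁ K₂ : ℝ) (F : ℝ → ℝ)
    (hτ : 0 < τ) (hM : 1 < M) (hℓpos : 0 < ℓ)
    (hF : ContDiff ℝ 1 F)
    (hK₀ : K₀ = ⨆ ξ : Set.Icc (-M) M, |F ξ.1|)
    (hK₁ : K₁ = ⨆ ξ : Set.Icc (-M) M, |deriv F ξ.1|)
    (hK₂ : K₂ = M + τ * K₀ / 2)
    (hℓ : τ * K₀ ≤ ℓ) :
    ∃ ε₀ : ℝ, 0 < ε₀ ∧
      ε₀ = (if 0 < K₁ then min (1 / (2 * K₂)) (1 / (τ * ℓ * K₁)) else 1 / (2 * K₂)) ∧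
      ∀ ε : ℝ, |ε| ≤ ε₀ →
        ∀ z : ℝ → ℝ, memC (-(3 / 2)) 0 ℓ z →
          (∀ t ∈ Set.Icc (-(3 / 2) : ℝ) 0, |z t| ≤ M) →
          (∀ w, mem0 ℓ K₂ (z 0) w → mem0 ℓ K₂ (z 0) (Oz τ ε F z w)) ∧
          ∀ w₁ w₂, mem0 ℓ K₂ (z 0) w₁ → mem0 ℓ K₂ (z 0) w₂ →
            dd (Oz τ ε F z w₁) (Oz τ ε F z w₂) ≤ (1 / 2) * dd w₁ w₂ := by
  lift K₁ to ℝ≥0 using hK₁ ▸ Real.iSup_nonneg fun _ => abs_nonneg _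
  exact Oz_contraction_general hτ (by linarith) hℓpos
    (fun x hx => hK₀ ▸ abs_le_iSup_abs_of_continuousOn isCompact_Icc hF.continuous.continuousOn hx)
    (lipschitzOnWith_of_iSup_abs_deriv_le isCompact_Icc (convex_Icc _ _) hF hK₁.ge) hK₂ hℓ
end

section
/- (Half-Stroboscopic map) In the setting below, suppose ℓ ≥ τK₀ and |ε| ≤ ε₀, where ε₀ = min{1/(2K₂), 1/(τℓK₁)} if K₁ > 0 and ε₀ = 1/(2K₂) otherwise. Then for every z ∈ C^{0,ℓ}([−3/2,0]) with sup_{[−3/2,0]}|z| ≤ M there exists a unique function Ψ ∈ C^{0,ℓ}_0([0,1/2]) satisfying the fixed point equation Ψ(t) = z(0) + τ ∫₀ᵗ F(z(s − 1 + ε Ψ(s))) ds for all t ∈ [0,1/2]. -/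
/-!
Differentiating the fixed point equation turns it into the initial value problem
`Ψ' = τ F(z(t - 1 + ε Ψ))`, `Ψ(0) = z(0)`. If `|ε| K₂ ≤ 1/2`, the delayed time `t - 1 + ε x` lies in
`[-3/2, 0]` for all `t ∈ [0, 1/2]` and `|x| ≤ K₂`, so on this region the vector field is Lipschitz
in `x` and bounded by `τ K₀`. The closed ball of radius `τ K₀ / 2` around `z(0)` lies in
`{|x| ≤ K₂}` and cannot be left before time `1/2`: Picard–Lindelöf on it gives existence on all
of `[0, 1/2]`, and Grönwall's inequality gives uniqueness.
-/

open Set Metric Function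
open scoped NNReal

section Picard

variable {E : Type*} [NormedAddCommGroup E] [NormedSpace ℝ E] [CompleteSpace E]
  {f : ℝ → E → E} {α β : ℝ → E} {tmin tmax : ℝ} {x₀ : E}

theorem exists_eqOn_picard_mapsTo_closedBall {t₀ : Icc tmin tmax} {x : E} {a r L K : ℝ≥0}
    (hf : IsPicardLindelof f t₀ x₀ a r L K) (hx : x ∈ closedBall x₀ r) :
    ∃ α : ℝ → E, Continuous α ∧ MapsTo α (Icc tmin tmax) (closedBall x₀ a) ∧
      EqOn α (ODE.picard f t₀ x α) (Icc tmin tmax) := by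
  obtain ⟨α, hα⟩ := ODE.FunSpace.exists_isFixedPt_next hf hx
  refine ⟨α.compProj, α.continuous_compProj,
    fun _ _ ↦ α.compProj_mem_closedBall hf.mul_max_le, fun t ht ↦ ?_⟩
  rw [ODE.FunSpace.compProj_of_mem ht]
  exact (ODE.FunSpace.isFixedPt_next_iff hf hx).mp hα ⟨t, ht⟩

theorem hasDerivWithinAt_of_eqOn_picard {t₀ t : ℝ} {u : Set E} (ht₀ : t₀ ∈ Icc tmin tmax)
    (hf : ContinuousOn (uncurry f) (Icc tmin tmax ×ˢ u)) (hα : ContinuousOn α (Icc tmin tmax))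
    (hαu : MapsTo α (Icc tmin tmax) u) (hfix : EqOn α (ODE.picard f t₀ x₀ α) (Icc tmin tmax))
    (ht : t ∈ Icc tmin tmax) :
    HasDerivWithinAt α (f t (α t)) (Icc tmin tmax) t :=
  (ODE.hasDerivWithinAt_picard_Icc ht₀ hf hα hαu x₀ ht).congr_of_mem hfix ht

theorem eqOn_Icc_of_eqOn_picard {K : ℝ≥0} {u : Set E}
    (hf : ContinuousOn (uncurry f) (Icc tmin tmax ×ˢ u))
    (hfK : ∀ t ∈ Icc tmin tmax, LipschitzOnWith K (f t) u)
    (hα : ContinuousOn α (Icc tmin tmax)) (hαu : MapsTo α (Icc tmin tmax) u)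
    (hαfix : EqOn α (ODE.picard f tmin x₀ α) (Icc tmin tmax))
    (hβ : ContinuousOn β (Icc tmin tmax)) (hβu : MapsTo β (Icc tmin tmax) u)
    (hβfix : EqOn β (ODE.picard f tmin x₀ β) (Icc tmin tmax)) :
    EqOn α β (Icc tmin tmax) := by
  intro t ht
  have hmin : tmin ∈ Icc tmin tmax := left_mem_Icc.mpr (ht.1.trans ht.2)
  have right_deriv {γ : ℝ → E} (hγ : ContinuousOn γ (Icc tmin tmax))
      (hγu : MapsTo γ (Icc tmin tmax) u)
      (hγfix : EqOn γ (ODE.picard f tmin x₀ γ) (Icc tmin tmax)) :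
      ∀ s ∈ Ico tmin tmax, HasDerivWithinAt γ (f s (γ s)) (Ici s) s := fun s hs ↦
    (hasDerivWithinAt_of_eqOn_picard hmin hf hγ hγu hγfix
      (Ico_subset_Icc_self hs)).mono_of_mem_nhdsWithin (Icc_mem_nhdsGE_of_mem hs)
  have initial_eq : α tmin = β tmin := by
    rw [hαfix hmin, hβfix hmin, ODE.picard_apply₀, ODE.picard_apply₀]
  exact ODE_solution_unique_of_mem_Icc_right (fun s hs ↦ hfK s (Ico_subset_Icc_self hs))
    hα (right_deriv hα hαu hαfix) (fun s hs ↦ hαu (Ico_subset_Icc_self hs))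
    hβ (right_deriv hβ hβu hβfix) (fun s hs ↦ hβu (Ico_subset_Icc_self hs)) initial_eq ht

end Picard

theorem lipschitzOnWith_of_memC {a b ℓ : ℝ} {f : ℝ → ℝ} (hf : memC a b ℓ f) :
    LipschitzOnWith ℓ.toNNReal f (Icc a b) := by
  obtain ⟨hcont, hderiv⟩ := hf
  rcases eq_or_ne a b with rfl | hab
  · simp [LipschitzOnWith]
  have interior_lipschitz : LipschitzOnWith ℓ.toNNReal f (Ioo a b) :=
    (convex_Ioo a b).lipschitzOnWith_of_nnnorm_deriv_le (fun t ht ↦ (hderiv t ht).1)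
      fun t ht ↦ NNReal.le_toNNReal_of_coe_le (hderiv t ht).2
  rw [← closure_Ioo hab] at hcont ⊢
  exact interior_lipschitz.closure hcont

theorem memC_of_hasDerivWithinAt_Icc {a b ℓ : ℝ} {f f' : ℝ → ℝ}
    (hf : ∀ t ∈ Icc a b, HasDerivWithinAt f (f' t) (Icc a b) t)
    (hf' : ∀ t ∈ Ioo a b, |f' t| ≤ ℓ) : memC a b ℓ f := by
  refine ⟨HasDerivWithinAt.continuousOn hf, fun t ht ↦ ?_⟩
  have hft : HasDerivAt f (f' t) t :=
    (hf t (Ioo_subset_Icc_self ht)).hasDerivAt (Icc_mem_nhds ht.1 ht.2)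
  exact ⟨hft.differentiableAt, hft.deriv ▸ hf' t ht⟩

/-- The right-hand side of the ordinary differential equation `Ψ' = τ F(z(t - 1 + ε Ψ))` for which
`Oz` is the Picard operator, as a time-dependent vector field on `ℝ`. -/
def delayField (τ ε : ℝ) (F z : ℝ → ℝ) (t x : ℝ) : ℝ :=
  τ * F (z (t - 1 + ε * x))

section DelayField

variable {τ ε x₀ T : ℝ} {F z : ℝ → ℝ} {I S R u : Set ℝ} {KF Kz a L : ℝ≥0}

theorem picard_delayField (w : ℝ → ℝ) :
    ODE.picard (delayField τ ε F z) 0 (z 0) w = Oz τ ε F z w := by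
  ext t
  simp only [ODE.picard_apply, delayField, Oz, intervalIntegral.integral_const_mul]

theorem continuousOn_uncurry_delayField (hF : ContinuousOn F R) (hz : ContinuousOn z S)
    (hzR : MapsTo z S R) (hS : ∀ t ∈ I, ∀ x ∈ u, t - 1 + ε * x ∈ S) :
    ContinuousOn (uncurry (delayField τ ε F z)) (I ×ˢ u) := by
  have hshift : MapsTo (fun p : ℝ × ℝ ↦ p.1 - 1 + ε * p.2) (I ×ˢ u) S :=
    fun p hp ↦ hS p.1 hp.1 p.2 hp.2
  exact continuousOn_const.mul ((hF.comp hz hzR).comp (by fun_prop) hshift)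

theorem lipschitzOnWith_delayField {t : ℝ} (hF : LipschitzOnWith KF F R)
    (hz : LipschitzOnWith Kz z S) (hzR : MapsTo z S R) (hS : ∀ x ∈ u, t - 1 + ε * x ∈ S) :
    LipschitzOnWith (‖τ‖₊ * (KF * Kz * ‖ε‖₊)) (delayField τ ε F z t) u := by
  have hshift : LipschitzWith ‖ε‖₊ (fun x ↦ t - 1 + ε * x) := by
    simpa using (LipschitzWith.const (t - 1)).add (lipschitzWith_smul ε)
  exact (lipschitzWith_smul τ).comp_lipschitzOnWith
    ((hF.comp hz hzR).comp hshift.lipschitzOnWith hS)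

theorem isPicardLindelof_delayField (hT : 0 ≤ T) (hF : LipschitzOnWith KF F R)
    (hz : LipschitzOnWith Kz z S) (hzR : MapsTo z S R) (hL : ∀ ξ ∈ R, |τ * F ξ| ≤ L)
    (hS : ∀ t ∈ Icc 0 T, ∀ x ∈ closedBall x₀ a, t - 1 + ε * x ∈ S) (hLT : L * T ≤ a) :
    IsPicardLindelof (delayField τ ε F z) (⟨0, left_mem_Icc.mpr hT⟩ : Icc 0 T) x₀ a 0 L
      (‖τ‖₊ * (KF * Kz * ‖ε‖₊)) where
  lipschitzOnWith t ht := lipschitzOnWith_delayField hF hz hzR (hS t ht)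
  continuousOn x hx :=
    (continuousOn_uncurry_delayField hF.continuousOn hz.continuousOn hzR hS).comp
      (Continuous.prodMk_left x).continuousOn fun t ht ↦ ⟨ht, hx⟩
  norm_le t ht x hx := hL _ (hzR (hS t ht x hx))
  mul_max_le := by simpa [hT] using hLT

theorem exists_eqOn_Oz_mapsTo_closedBall {L : ℝ} (hT : 0 ≤ T) (hL_nonneg : 0 ≤ L)
    (hF : LipschitzOnWith KF F R) (hz : LipschitzOnWith Kz z S) (hzR : MapsTo z S R)
    (hL : ∀ ξ ∈ R, |τ * F ξ| ≤ L)
    (hS : ∀ t ∈ Icc 0 T, ∀ x ∈ closedBall (z 0) (L * T), t - 1 + ε * x ∈ S) :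
    ∃ Ψ : ℝ → ℝ, Continuous Ψ ∧ MapsTo Ψ (Icc 0 T) (closedBall (z 0) (L * T)) ∧
      EqOn Ψ (Oz τ ε F z Ψ) (Icc 0 T) := by
  lift L to ℝ≥0 using hL_nonneg
  lift T to ℝ≥0 using hT
  have hpicard := isPicardLindelof_delayField (a := L * T) T.2 hF hz hzR hL hS le_rfl
  obtain ⟨Ψ, hΨ, hΨball, hΨfix⟩ :=
    exists_eqOn_picard_mapsTo_closedBall hpicard (mem_closedBall_self le_rfl)
  exact ⟨Ψ, hΨ, hΨball, picard_delayField Ψ ▸ hΨfix⟩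

theorem memC_of_eqOn_Oz {ℓ : ℝ} {Ψ : ℝ → ℝ} (hT : 0 ≤ T) (hF : ContinuousOn F R)
    (hz : ContinuousOn z S) (hzR : MapsTo z S R) (hℓ : ∀ ξ ∈ R, |τ * F ξ| ≤ ℓ)
    (hS : ∀ t ∈ Icc 0 T, ∀ x ∈ u, t - 1 + ε * x ∈ S) (hΨ : ContinuousOn Ψ (Icc 0 T))
    (hΨu : MapsTo Ψ (Icc 0 T) u) (hΨfix : EqOn Ψ (Oz τ ε F z Ψ) (Icc 0 T)) :
    memC 0 T ℓ Ψ := by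
  rw [← picard_delayField] at hΨfix
  have hderiv : ∀ t ∈ Icc 0 T, HasDerivWithinAt Ψ (delayField τ ε F z t (Ψ t)) (Icc 0 T) t :=
    fun t ht ↦ hasDerivWithinAt_of_eqOn_picard (left_mem_Icc.mpr hT)
      (continuousOn_uncurry_delayField hF hz hzR hS) hΨ hΨu hΨfix ht
  refine memC_of_hasDerivWithinAt_Icc hderiv fun t ht ↦ ?_
  have ht' := Ioo_subset_Icc_self ht
  exact hℓ _ (hzR (hS t ht' _ (hΨu ht')))

theorem eqOn_Icc_of_eqOn_Oz {Ψ Φ : ℝ → ℝ} (hF : LipschitzOnWith KF F R)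
    (hz : LipschitzOnWith Kz z S) (hzR : MapsTo z S R)
    (hS : ∀ t ∈ Icc 0 T, ∀ x ∈ u, t - 1 + ε * x ∈ S)
    (hΨ : ContinuousOn Ψ (Icc 0 T)) (hΨu : MapsTo Ψ (Icc 0 T) u)
    (hΨfix : EqOn Ψ (Oz τ ε F z Ψ) (Icc 0 T))
    (hΦ : ContinuousOn Φ (Icc 0 T)) (hΦu : MapsTo Φ (Icc 0 T) u)
    (hΦfix : EqOn Φ (Oz τ ε F z Φ) (Icc 0 T)) :
    EqOn Ψ Φ (Icc 0 T) := by
  rw [← picard_delayField] at hΨfix hΦfix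
  exact eqOn_Icc_of_eqOn_picard
    (continuousOn_uncurry_delayField hF.continuousOn hz.continuousOn hzR hS)
    (fun t ht ↦ lipschitzOnWith_delayField hF hz hzR (hS t ht)) hΨ hΨu hΨfix hΦ hΦu hΦfix

end DelayField

theorem sub_one_add_mul_mem_Icc {ε K t x : ℝ} (hε : |ε| * K ≤ 1 / 2)
    (ht : t ∈ Icc (0 : ℝ) (1 / 2)) (hx : |x| ≤ K) :
    t - 1 + ε * x ∈ Icc (-(3 / 2) : ℝ) 0 := by
  have hεx : |ε * x| ≤ 1 / 2 := by
    rw [abs_mul]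
    exact (mul_le_mul_of_nonneg_left hx (abs_nonneg ε)).trans hε
  obtain ⟨hlower, hupper⟩ := abs_le.mp hεx
  exact ⟨by linarith [ht.1], by linarith [ht.2]⟩

theorem half_stroboscopic_map_exists_unique_general
    (τ M ℓ ε K₀ K₂ : ℝ) (F : ℝ → ℝ) (KF Kz : ℝ≥0) (hτ : 0 ≤ τ)
    (hF : LipschitzOnWith KF F (Icc (-M) M)) (hK₀ : ∀ ξ ∈ Icc (-M) M, |F ξ| ≤ K₀)
    (hK₂ : M + τ * K₀ / 2 ≤ K₂) (hℓ : τ * K₀ ≤ ℓ) (hε : |ε| * K₂ ≤ 1 / 2)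
    (z : ℝ → ℝ) (hz : LipschitzOnWith Kz z (Icc (-(3 / 2)) 0))
    (hzM : ∀ t ∈ Icc (-(3 / 2) : ℝ) 0, |z t| ≤ M) :
    ∃ Ψ : ℝ → ℝ,
      (mem0 ℓ K₂ (z 0) Ψ ∧
        ∀ t ∈ Icc (0 : ℝ) (1 / 2),
          Ψ t = z 0 + τ * ∫ s in (0 : ℝ)..t, F (z (s - 1 + ε * Ψ s))) ∧
      ∀ Ψ' : ℝ → ℝ,
        (mem0 ℓ K₂ (z 0) Ψ' ∧
          ∀ t ∈ Icc (0 : ℝ) (1 / 2),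
            Ψ' t = z 0 + τ * ∫ s in (0 : ℝ)..t, F (z (s - 1 + ε * Ψ' s))) →
        ∀ t ∈ Icc (0 : ℝ) (1 / 2), Ψ' t = Ψ t := by
  have h0 : (0 : ℝ) ∈ Icc (-(3 / 2) : ℝ) 0 := by norm_num
  have hhalf : (0 : ℝ) ≤ 1 / 2 := by norm_num
  have hzR : MapsTo z (Icc (-(3 / 2)) 0) (Icc (-M) M) := fun t ht ↦ abs_le.mp (hzM t ht)
  have hL_nonneg : 0 ≤ τ * K₀ := mul_nonneg hτ ((abs_nonneg _).trans (hK₀ _ (hzR h0)))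
  have hL : ∀ ξ ∈ Icc (-M) M, |τ * F ξ| ≤ τ * K₀ := fun ξ hξ ↦ by
    rw [abs_mul, abs_of_nonneg hτ]
    exact mul_le_mul_of_nonneg_left (hK₀ ξ hξ) hτ
  have hS : ∀ t ∈ Icc (0 : ℝ) (1 / 2), ∀ x ∈ {x | |x| ≤ K₂}, t - 1 + ε * x ∈ Icc (-(3 / 2)) 0 :=
    fun t ht x hx ↦ sub_one_add_mul_mem_Icc hε ht hx
  have hball : closedBall (z 0) (τ * K₀ * (1 / 2)) ⊆ {x | |x| ≤ K₂} := fun x hx ↦ by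
    rw [mem_closedBall, Real.dist_eq] at hx
    rw [mem_ofPred_eq]
    linarith [abs_sub_abs_le_abs_sub x (z 0), hzM 0 h0]
  obtain ⟨Ψ, hΨ, hΨball, hΨfix⟩ := exists_eqOn_Oz_mapsTo_closedBall hhalf hL_nonneg hF hz hzR hL
    fun t ht x hx ↦ hS t ht x (hball hx)
  have hΨK₂ : MapsTo Ψ (Icc 0 (1 / 2)) {x | |x| ≤ K₂} := hΨball.mono_right hball
  have hΨC : memC 0 (1 / 2) ℓ Ψ := memC_of_eqOn_Oz hhalf hF.continuousOn hz.continuousOn hzR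
    (fun ξ hξ ↦ (hL ξ hξ).trans hℓ) hS hΨ.continuousOn hΨK₂ hΨfix
  have hΨ0 : Ψ 0 = z 0 := by simpa [Oz] using hΨfix (left_mem_Icc.mpr hhalf)
  refine ⟨Ψ, ⟨⟨hΨC, hΨ0, hΨK₂⟩, hΨfix⟩, fun Ψ' ⟨⟨hΨ'C, _, hΨ'K₂⟩, hΨ'fix⟩ ↦ ?_⟩
  exact eqOn_Icc_of_eqOn_Oz hF hz hzR hS hΨ'C.1 hΨ'K₂ hΨ'fix hΨ.continuousOn hΨK₂ hΨfix

/-- Half-Stroboscopic map: for `ℓ ≥ τK₀` and `|ε| ≤ ε₀`, with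
`ε₀ = min (1/(2K₂)) (1/(τℓK₁))` if `K₁ > 0` and `ε₀ = 1/(2K₂)` otherwise, every
admissible history `z` admits a unique `Ψ ∈ C^{0,ℓ}_0([0,1/2])` with
`Ψ(t) = z(0) + τ ∫₀ᵗ F (z (s - 1 + ε Ψ s)) ds` on `[0,1/2]`. -/
theorem half_stroboscopic_map_exists_unique
    (τ M ℓ ε ε₀ K₀ K₁ K₂ : ℝ) (F : ℝ → ℝ)
    (hτ : 0 < τ) (hM : 1 < M) (hℓpos : 0 < ℓ)
    (hF : ContDiff ℝ 1 F)
    (hK₀ : K₀ = ⨆ ξ : Set.Icc (-M) M, |F ξ.1|)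
    (hK₁ : K₁ = ⨆ ξ : Set.Icc (-M) M, |deriv F ξ.1|)
    (hK₂ : K₂ = M + τ * K₀ / 2)
    (hℓ : τ * K₀ ≤ ℓ)
    (hε₀ : ε₀ = (if 0 < K₁ then min (1 / (2 * K₂)) (1 / (τ * ℓ * K₁)) else 1 / (2 * K₂)))
    (hε : |ε| ≤ ε₀)
    (z : ℝ → ℝ) (hz : memC (-(3 / 2)) 0 ℓ z)
    (hzM : ∀ t ∈ Set.Icc (-(3 / 2) : ℝ) 0, |z t| ≤ M) :
    ∃ Ψ : ℝ → ℝ,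
      (mem0 ℓ K₂ (z 0) Ψ ∧
        ∀ t ∈ Set.Icc (0 : ℝ) (1 / 2),
          Ψ t = z 0 + τ * ∫ s in (0 : ℝ)..t, F (z (s - 1 + ε * Ψ s))) ∧
      ∀ Ψ' : ℝ → ℝ,
        (mem0 ℓ K₂ (z 0) Ψ' ∧
          ∀ t ∈ Set.Icc (0 : ℝ) (1 / 2),
            Ψ' t = z 0 + τ * ∫ s in (0 : ℝ)..t, F (z (s - 1 + ε * Ψ' s))) →
        ∀ t ∈ Set.Icc (0 : ℝ) (1 / 2), Ψ' t = Ψ t := by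
  obtain ⟨KF, hKF⟩ := hF.locallyLipschitz.locallyLipschitzOn.exists_lipschitzOnWith_of_compact
    (isCompact_Icc (a := -M) (b := M))
  have hFK₀ : ∀ ξ ∈ Icc (-M) M, |F ξ| ≤ K₀ := fun ξ hξ ↦ hK₀ ▸
    le_ciSup_set (isCompact_Icc.bddAbove_image hF.continuous.abs.continuousOn) hξ
  have hK₂_pos : 0 < K₂ := by
    have hK₀_nonneg : 0 ≤ K₀ := (abs_nonneg _).trans (hFK₀ M (right_mem_Icc.mpr (by linarith)))
    rw [hK₂]
    positivity
  have hε₀_le : ε₀ ≤ 1 / (2 * K₂) := by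
    rw [hε₀]
    split_ifs
    exacts [min_le_left _ _, le_rfl]
  have hεK₂ : |ε| * K₂ ≤ 1 / 2 :=
    (mul_le_mul_of_nonneg_right (hε.trans hε₀_le) hK₂_pos.le).trans_eq (by field_simp)
  exact half_stroboscopic_map_exists_unique_general τ M ℓ ε K₀ K₂ F KF ℓ.toNNReal hτ.le hKF hFK₀
    hK₂.ge hℓ hεK₂ z (lipschitzOnWith_of_memC hz) hzM
end

section
/- In the setting below, suppose ℓ ≥ τK₀ and |ε| ≤ ε₀ with ε₀ = min{1/(2K₂), 1/(τℓK₁)} (ε₀ = 1/(2K₂) if K₁ = 0). Let x₀ ∈ C^{0,ℓ}([−3/2,0]) with sup_{[−3/2,0]}|x₀| ≤ M. Define inductively x_{m/2} for m ≥ 0 by x_0 = x₀ and, for m ≥ 1, x_{m/2} : [−3/2 − m/2, 0] → ℝ given by x_{m/2}(t) = x_{(m−1)/2}(t + 1/2) for t ∈ [−3/2 − m/2, −1/2] and x_{m/2}(t) = Ψ_ε(x_{(m−1)/2})(t + 1/2) for t ∈ [−1/2, 0], where Ψ_ε(z) is the unique fixed point of O_z applied to the restriction of x_{(m−1)/2}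 to its last window [−3/2, 0]. Assume that for every m ≥ 0 one has |x_{m/2}(t)| ≤ M on the domain of x_{m/2}. Then the definition x(t) = x_{m/2}(t − m/2) for t ≤ m/2 is consistent in m and yields a continuous, ℓ-Lipschitz function x : [−3/2, ∞) → ℝ with x = x₀ on [−3/2, 0] and x(t) = x₀(0) + τ ∫₀ᵗ F(x(s − 1 + ε x(s))) ds for all t ≥ 0; in particular x is a global forward solution of x′(t) = τ F(x(t − 1 + ε x(t))) with history x₀. -/
/-!
In absolute time the pieces `t ↦ xs m (t - m / N)` extend one another, so they glue to a function
`x` on `[-r, ∞)`. Lipschitz bounds with the same constant on adjacent intervals concatenate, since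
distances on the line add up through the common endpoint. The bound on the pieces keeps
`s - 1 + ε x(s)` inside the window already constructed, so the fixed point equation of each step is
the integral equation for `x` on one step; summing over the steps gives it on `[0, ∞)`.
-/

open Filter MeasureTheory Set
open scoped NNReal

section Gluing

variable {α β : Type*}

lemma eq_of_forall_eqOn_succ {S : ℕ → Set α} {y : ℕ → α → β} (hS : Monotone S)
    (hy : ∀ m, EqOn (y (m + 1)) (y m) (S m)) {m n : ℕ} {t : α} (hm : t ∈ S m) (hn : t ∈ S n) :
    y m t = y n t := by
  wlog hmn : m ≤ n generalizing m n
  · exact (this hn hm (le_of_not_ge hmn)).symm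
  induction n, hmn using Nat.le_induction with
  | base => rfl
  | succ n hmn ih =>
    have ht : t ∈ S n := hS hmn hm
    exact (ih ht).trans (hy n ht).symm

lemma exists_forall_eqOn_of_forall_eq {ι : Type*} [Nonempty β] {S : ι → Set α} {y : ι → α → β}
    (h : ∀ m n t, t ∈ S m → t ∈ S n → y m t = y n t) : ∃ x : α → β, ∀ m, EqOn x (y m) (S m) := by
  have hvalue (t : α) : ∃ v, ∀ m, t ∈ S m → v = y m t := by
    by_cases ht : ∃ n, t ∈ S n
    · obtain ⟨n, hn⟩ := ht
      exact ⟨y n t, fun m hm => h n m t hn hm⟩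
    · exact ⟨Classical.arbitrary β, fun m hm => (ht ⟨m, hm⟩).elim⟩
  choose x hx using hvalue
  exact ⟨x, fun m t => hx t m⟩

end Gluing

section Lipschitz

variable {E : Type*} [PseudoMetricSpace E] {K : ℝ≥0} {f : ℝ → E} {a : ℝ}

lemma lipschitzOnWith_Icc_append {b c : ℝ} (hab : LipschitzOnWith K f (Icc a b))
    (hbc : LipschitzOnWith K f (Icc b c)) : LipschitzOnWith K f (Icc a c) := by
  refine LipschitzOnWith.of_dist_le_mul fun s hs t ht => ?_
  wlog hst : s ≤ t generalizing s t
  · simpa only [dist_comm] using this t ht s hs (le_of_not_ge hst)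
  rcases le_total t b with htb | hbt
  · exact hab.dist_le_mul s ⟨hs.1, hst.trans htb⟩ t ⟨ht.1, htb⟩
  rcases le_total b s with hbs | hsb
  · exact hbc.dist_le_mul s ⟨hbs, hs.2⟩ t ⟨hbt, ht.2⟩
  calc dist (f s) (f t)
      ≤ dist (f s) (f b) + dist (f b) (f t) := dist_triangle _ _ _
    _ ≤ K * dist s b + K * dist b t :=
        add_le_add (hab.dist_le_mul s ⟨hs.1, hsb⟩ b ⟨hs.1.trans hsb, le_rfl⟩)
          (hbc.dist_le_mul b ⟨le_rfl, hbt.trans ht.2⟩ t ⟨hbt, ht.2⟩)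
    _ = K * dist s t := by
        rw [← mul_add, dist_add_dist_of_mem_segment (segment_eq_Icc hst ▸ ⟨hsb, hbt⟩)]

lemma lipschitzOnWith_Ici_of_forall_Icc_succ {b : ℕ → ℝ} (hb : Tendsto b atTop atTop)
    (hzero : LipschitzOnWith K f (Icc a (b 0)))
    (hsucc : ∀ m, LipschitzOnWith K f (Icc (b m) (b (m + 1)))) : LipschitzOnWith K f (Ici a) := by
  have hIcc (m : ℕ) : LipschitzOnWith K f (Icc a (b m)) := by
    induction m with
    | zero => exact hzero
    | succ m ih => exact lipschitzOnWith_Icc_append ih (hsucc m)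
  intro s hs t ht
  obtain ⟨m, hm⟩ := (hb.eventually_ge_atTop (max s t)).exists
  exact hIcc m ⟨hs, (le_max_left s t).trans hm⟩ ⟨ht, (le_max_right s t).trans hm⟩

end Lipschitz

lemma memC.lipschitzOnWith {a b : ℝ} {ℓ : ℝ≥0} {f : ℝ → ℝ} (hf : memC a b ℓ f) :
    LipschitzOnWith ℓ f (Icc a b) := by
  obtain hab | hab := eq_or_ne a b
  · simp [hab, LipschitzOnWith]
  rw [← closure_Ioo hab]
  refine LipschitzOnWith.closure (by rw [closure_Ioo hab]; exact hf.1) ?_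
  exact (convex_Ioo a b).lipschitzOnWith_of_nnnorm_deriv_le (fun t ht => (hf.2 t ht).1)
    fun t ht => (hf.2 t ht).2

lemma eq_add_integral_of_forall_Icc_succ {E : Type*} [NormedAddCommGroup E] [NormedSpace ℝ E]
    {x g : ℝ → E} {b : ℕ → ℝ} (hb : Monotone b) (hb_top : Tendsto b atTop atTop)
    (hg : ∀ t, b 0 ≤ t → IntervalIntegrable g volume (b 0) t)
    (hx : ∀ m, ∀ t ∈ Icc (b m) (b (m + 1)), x t = x (b m) + ∫ s in b m..t, g s)
    {t : ℝ} (ht : b 0 ≤ t) : x t = x (b 0) + ∫ s in b 0..t, g s := by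
  obtain ⟨m, hm⟩ := (hb_top.eventually_ge_atTop t).exists
  induction m generalizing t with
  | zero => simp [le_antisymm hm ht]
  | succ m ih =>
    rcases le_total t (b m) with htm | hmt
    · exact ih ht htm
    · have h0m : b 0 ≤ b m := hb (Nat.zero_le m)
      calc x t = x (b m) + ∫ s in b m..t, g s := hx m t ⟨hmt, hm⟩
        _ = x (b 0) + ((∫ s in b 0..b m, g s) + ∫ s in b m..t, g s) := by
            rw [ih h0m le_rfl, add_assoc]
        _ = x (b 0) + ∫ s in b 0..t, g s := by
            rw [intervalIntegral.integral_add_adjacent_intervals (hg _ h0m)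
              ((hg _ h0m).symm.trans (hg t ht))]

section Delay

variable {τ ε : ℝ} {F x : ℝ → ℝ}

lemma delay_mem_Icc {M s v : ℝ} (hv : |v| ≤ M) :
    s - 1 + ε * v ∈ Icc (s - 1 - |ε| * M) (s - 1 + |ε| * M) := by
  have hεv : |ε * v| ≤ |ε| * M := by
    rw [abs_mul]
    gcongr
  obtain ⟨hlower, hupper⟩ := abs_le.1 hεv
  constructor <;> linarith

lemma continuousOn_comp_delay {S T : Set ℝ} (hF : Continuous F) (hx : ContinuousOn x S)
    (hTS : T ⊆ S) (hdelay : MapsTo (fun s => s - 1 + ε * x s) T S) :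
    ContinuousOn (fun s => F (x (s - 1 + ε * x s))) T := by
  have hxT : ContinuousOn x T := hx.mono hTS
  exact hF.comp_continuousOn (hx.comp (by fun_prop) hdelay)

lemma eq_add_integral_of_eq_Oz {z w : ℝ → ℝ} {S : Set ℝ} {c t : ℝ} (ht : 0 ≤ t) (hS : 0 ∈ S)
    (hz : ∀ s ∈ S, x (s + c) = z s) (hw : ∀ s ∈ Icc 0 t, x (s + c) = w s)
    (hdelay : MapsTo (fun s => s - 1 + ε * w s) (Icc 0 t) S) (hfix : w t = Oz τ ε F z w t) :
    x (t + c) = x c + τ * ∫ s in c..t + c, F (x (s - 1 + ε * x s)) := by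
  have hintegrand : ∀ s ∈ Icc 0 t,
      F (z (s - 1 + ε * w s)) = F (x (s + c - 1 + ε * x (s + c))) := fun s hs => by
    rw [← hz _ (hdelay hs), hw s hs]
    ring_nf
  calc x (t + c) = z 0 + τ * ∫ s in 0..t, F (z (s - 1 + ε * w s)) :=
        (hw t ⟨ht, le_rfl⟩).trans hfix
    _ = x c + τ * ∫ s in 0..t, F (x (s + c - 1 + ε * x (s + c))) := by
        rw [← hz 0 hS, zero_add, intervalIntegral.integral_congr (by rwa [uIcc_of_le ht])]
    _ = x c + τ * ∫ s in c..t + c, F (x (s - 1 + ε * x s)) := by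
        rw [intervalIntegral.integral_comp_add_right fun s => F (x (s - 1 + ε * x s)), zero_add]

lemma abs_mul_le_half {K₀ K₁ K₂ M ℓ : ℝ} (hM : 0 < M) (hτ : 0 ≤ τ) (hK₀ : 0 ≤ K₀)
    (hK₂ : K₂ = M + τ * K₀ / 2)
    (hε : |ε| ≤ if 0 < K₁ then min (1 / (2 * K₂)) (1 / (τ * ℓ * K₁)) else 1 / (2 * K₂)) :
    |ε| * M ≤ 1 / 2 := by
  have hε_le : |ε| ≤ 1 / (2 * K₂) :=
    hε.trans (by split_ifs; exacts [min_le_left _ _, le_rfl])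
  have hMK₂ : M ≤ K₂ := by rw [hK₂]; exact le_add_of_nonneg_right (by positivity)
  have hK₂_pos : 0 < K₂ := hM.trans_le hMK₂
  calc |ε| * M ≤ 1 / (2 * K₂) * K₂ := by gcongr
    _ = 1 / 2 := by field_simp

end Delay

/-- `x` is the function on `[a, ∞)` glued from the pieces `xs m`, where `xs m` describes `x` on
`[a, m / N]` with time counted from the right endpoint. There are `N` steps per unit of time, so the
`x_{m/2}` of the theorem correspond to `N = 2`; values of `x` to the left of `a` are arbitrary. -/
def IsGluing {E : Type*} (a N : ℝ) (xs : ℕ → ℝ → E) (x : ℝ → E) : Prop :=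
  ∀ m : ℕ, ∀ t ∈ Icc a (m / N), x t = xs m (t - m / N)

lemma monotone_natCast_div {N : ℝ} (hN : 0 ≤ N) : Monotone fun m : ℕ => (m : ℝ) / N :=
  fun _ _ hmn => div_le_div_of_nonneg_right (Nat.cast_le.2 hmn) hN

lemma tendsto_natCast_div_atTop {N : ℝ} (hN : 0 < N) :
    Tendsto (fun m : ℕ => (m : ℝ) / N) atTop atTop :=
  tendsto_natCast_atTop_atTop.atTop_div_const hN

lemma natCast_succ_div (m : ℕ) (N : ℝ) : ((m + 1 : ℕ) : ℝ) / N = m / N + 1 / N := by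
  rw [Nat.cast_succ, add_div]

lemma eq_of_forall_shift_succ {E : Type*} {a N : ℝ} {xs : ℕ → ℝ → E} (hN : 0 ≤ N)
    (hshift : ∀ m : ℕ, ∀ t ∈ Icc (a - (m + 1 : ℕ) / N) (-(1 / N)), xs (m + 1) t = xs m (t + 1 / N))
    (m n : ℕ) (t : ℝ) (hm : t ∈ Icc a (m / N)) (hn : t ∈ Icc a (n / N)) :
    xs m (t - m / N) = xs n (t - n / N) := by
  refine eq_of_forall_eqOn_succ (S := fun k : ℕ => Icc a (k / N)) (y := fun k t => xs k (t - k / N))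
    (fun _ _ hkl => Icc_subset_Icc_right (monotone_natCast_div hN hkl)) (fun k s hs => ?_) hm hn
  have hsucc_div := natCast_succ_div k N
  beta_reduce
  rw [hshift k _ ⟨by linarith [hs.1], by linarith [hs.2]⟩, hsucc_div]
  ring_nf

namespace IsGluing

section Pieces

variable {E : Type*} {a N : ℝ} {xs : ℕ → ℝ → E} {x : ℝ → E}

lemma apply_add (hx : IsGluing a N xs x) {m : ℕ} {s : ℝ} (hs : s ∈ Icc (a - m / N) 0) :
    x (s + m / N) = xs m s := by
  rw [hx m _ ⟨by linarith [hs.1], by linarith [hs.2]⟩, add_sub_cancel_right]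

lemma apply_add_eq_succ (hx : IsGluing a N xs x) (hN : 0 ≤ N) (ha : a ≤ 0) {m : ℕ} {s : ℝ}
    (hs : s ∈ Icc 0 (1 / N)) : x (s + m / N) = xs (m + 1) (s - 1 / N) := by
  have hsucc_div := natCast_succ_div m N
  have hm : 0 ≤ (m : ℝ) / N := by positivity
  rw [← hx.apply_add ⟨by linarith [hs.1], by linarith [hs.2]⟩, hsucc_div]
  ring_nf

lemma eqOn_zero (hx : IsGluing a N xs x) : EqOn x (xs 0) (Icc a 0) := fun t ht => by
  simpa using hx 0 t (by simpa using ht)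

lemma norm_le [Norm E] {M : ℝ} (hx : IsGluing a N xs x) (hN : 0 < N)
    (hbd : ∀ m : ℕ, ∀ s ∈ Icc (a - m / N) 0, ‖xs m s‖ ≤ M) {t : ℝ} (ht : a ≤ t) : ‖x t‖ ≤ M := by
  obtain ⟨m, hm⟩ := ((tendsto_natCast_div_atTop hN).eventually_ge_atTop t).exists
  rw [hx m t ⟨ht, hm⟩]
  exact hbd m _ ⟨by linarith, by linarith⟩

lemma lipschitzOnWith [PseudoMetricSpace E] {K : ℝ≥0} (hx : IsGluing a N xs x) (hN : 0 < N)
    (ha : a ≤ 0) (hzero : LipschitzOnWith K (xs 0) (Icc a 0))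
    (hsucc : ∀ m, LipschitzOnWith K (fun s => xs (m + 1) (s - 1 / N)) (Icc 0 (1 / N))) :
    LipschitzOnWith K x (Ici a) := by
  refine lipschitzOnWith_Ici_of_forall_Icc_succ (tendsto_natCast_div_atTop hN) ?_ fun m => ?_
  · simp only [Nat.cast_zero, zero_div]
    intro s hs t ht
    rw [hx.eqOn_zero hs, hx.eqOn_zero ht]
    exact hzero hs ht
  · have hsucc_div := natCast_succ_div m N
    have hpiece : ∀ t ∈ Icc ((m : ℝ) / N) ((m + 1 : ℕ) / N),
        t - m / N ∈ Icc 0 (1 / N) ∧ x t = xs (m + 1) (t - m / N - 1 / N) := fun t ht => by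
      have hmem : t - m / N ∈ Icc 0 (1 / N) := ⟨by linarith [ht.1], by linarith [ht.2]⟩
      exact ⟨hmem, by rw [← hx.apply_add_eq_succ hN.le ha hmem, sub_add_cancel]⟩
    refine LipschitzOnWith.of_dist_le_mul fun s hs t ht => ?_
    rw [(hpiece s hs).2, (hpiece t ht).2, ← dist_sub_right s t ((m : ℝ) / N)]
    exact (hsucc m).dist_le_mul _ (hpiece s hs).1 _ (hpiece t ht).1

end Pieces

variable {τ ε M r N : ℝ} {F x : ℝ → ℝ} {xs : ℕ → ℝ → ℝ}

lemma eq_add_integral_step (hx : IsGluing (-r) N xs x) (hN : 0 < N) (hr : 0 ≤ r)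
    (hM : ∀ t, -r ≤ t → |x t| ≤ M) (hεr : |ε| * M ≤ r - 1) (hεN : |ε| * M ≤ 1 - 1 / N)
    {m : ℕ} {t : ℝ} (ht : t ∈ Icc 0 (1 / N))
    (hfix : xs (m + 1) (t - 1 / N) = Oz τ ε F (xs m) (fun s => xs (m + 1) (s - 1 / N)) t) :
    x (t + m / N) = x (m / N) + τ * ∫ s in m / N..t + m / N, F (x (s - 1 + ε * x s)) := by
  have hm : 0 ≤ (m : ℝ) / N := by positivity
  have hw : ∀ s ∈ Icc 0 t, x (s + m / N) = xs (m + 1) (s - 1 / N) := fun s hs =>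
    hx.apply_add_eq_succ hN.le (neg_nonpos.2 hr) ⟨hs.1, hs.2.trans ht.2⟩
  refine eq_add_integral_of_eq_Oz ht.1 (S := Icc (-r) 0) ⟨neg_nonpos.2 hr, le_rfl⟩
    (fun s hs => hx.apply_add ⟨by linarith [hs.1], hs.2⟩) hw (fun s hs => ?_) hfix
  have hsM : |xs (m + 1) (s - 1 / N)| ≤ M := hw s hs ▸ hM _ (by linarith [hs.1])
  obtain ⟨hlower, hupper⟩ := delay_mem_Icc (ε := ε) (s := s) hsM
  exact ⟨by linarith [hs.1], by linarith [hs.2, ht.2]⟩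

lemma eq_add_integral (hx : IsGluing (-r) N xs x) (hN : 0 < N) (hr : 0 ≤ r) (hF : Continuous F)
    (hcont : ContinuousOn x (Ici (-r))) (hM : ∀ t, -r ≤ t → |x t| ≤ M) (hεr : |ε| * M ≤ r - 1)
    (hεN : |ε| * M ≤ 1 - 1 / N)
    (hfix : ∀ m, ∀ t ∈ Icc 0 (1 / N),
      xs (m + 1) (t - 1 / N) = Oz τ ε F (xs m) (fun s => xs (m + 1) (s - 1 / N)) t)
    {t : ℝ} (ht : 0 ≤ t) : x t = xs 0 0 + τ * ∫ s in 0..t, F (x (s - 1 + ε * x s)) := by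
  have hdelay : MapsTo (fun s => s - 1 + ε * x s) (Ici 0) (Ici (-r)) := fun s (hs : 0 ≤ s) => by
    have hlower := (delay_mem_Icc (ε := ε) (s := s) (hM s (by linarith))).1
    exact mem_Ici.2 (by linarith)
  have hg : ContinuousOn (fun s => τ * F (x (s - 1 + ε * x s))) (Ici 0) :=
    (continuousOn_comp_delay hF hcont (Ici_subset_Ici.2 (neg_nonpos.2 hr)) hdelay).const_mul τ
  have hstep : ∀ m : ℕ, ∀ t ∈ Icc ((m : ℝ) / N) ((m + 1 : ℕ) / N),
      x t = x (m / N) + ∫ s in m / N..t, τ * F (x (s - 1 + ε * x s)) := fun m t ht => by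
    have hsucc_div := natCast_succ_div m N
    have hmem : t - m / N ∈ Icc 0 (1 / N) := ⟨by linarith [ht.1], by linarith [ht.2]⟩
    simpa using hx.eq_add_integral_step hN hr hM hεr hεN hmem (hfix m _ hmem)
  have hsum := eq_add_integral_of_forall_Icc_succ (t := t) (monotone_natCast_div hN.le)
    (tendsto_natCast_div_atTop hN) (fun u hu => ?_) hstep (by simpa using ht)
  · simpa [hx.eqOn_zero ⟨neg_nonpos.2 hr, le_rfl⟩] using hsum
  · rw [Nat.cast_zero, zero_div] at hu ⊢
    exact (hg.mono (by rw [uIcc_of_le hu]; exact Icc_subset_Ici_self)).intervalIntegrable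

end IsGluing

theorem inductive_construction_global_solution_general
    {τ M ε r N : ℝ} {K : ℝ≥0} {F : ℝ → ℝ} {xs : ℕ → ℝ → ℝ} (hN : 0 < N) (hF : Continuous F)
    (hεr : |ε| * M ≤ r - 1) (hεN : |ε| * M ≤ 1 - 1 / N)
    (hzero : LipschitzOnWith K (xs 0) (Icc (-r) 0))
    (hshift : ∀ m : ℕ, ∀ t ∈ Icc (-r - (m + 1 : ℕ) / N) (-(1 / N)),
      xs (m + 1) t = xs m (t + 1 / N))
    (hsucc : ∀ m, LipschitzOnWith K (fun s => xs (m + 1) (s - 1 / N)) (Icc 0 (1 / N)))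
    (hfix : ∀ m, ∀ t ∈ Icc 0 (1 / N),
      xs (m + 1) (t - 1 / N) = Oz τ ε F (xs m) (fun s => xs (m + 1) (s - 1 / N)) t)
    (hbd : ∀ m : ℕ, ∀ t ∈ Icc (-r - m / N) 0, |xs m t| ≤ M) :
    (∀ m n : ℕ, ∀ t : ℝ, t ∈ Icc (-r) (m / N) → t ∈ Icc (-r) (n / N) →
      xs m (t - m / N) = xs n (t - n / N)) ∧
    ∃ x : ℝ → ℝ,
      (∀ m : ℕ, ∀ t ∈ Icc (-r) (m / N), x t = xs m (t - m / N)) ∧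
      ContinuousOn x (Ici (-r)) ∧
      (∀ s ∈ Ici (-r), ∀ t ∈ Ici (-r), |x s - x t| ≤ K * |s - t|) ∧
      (∀ t ∈ Icc (-r) 0, x t = xs 0 t) ∧
      ∀ t : ℝ, 0 ≤ t → x t = xs 0 0 + τ * ∫ s in (0 : ℝ)..t, F (x (s - 1 + ε * x s)) := by
  have hconsistent := eq_of_forall_shift_succ hN.le hshift
  obtain ⟨x, hx⟩ : ∃ x, IsGluing (-r) N xs x := exists_forall_eqOn_of_forall_eq hconsistent
  have hxM : ∀ t, -r ≤ t → |x t| ≤ M := fun _ => hx.norm_le hN hbd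
  have hM : 0 ≤ M := (abs_nonneg _).trans (hxM (-r) le_rfl)
  have hr : 0 ≤ r := by linarith [mul_nonneg (abs_nonneg ε) hM]
  have hlip : LipschitzOnWith K x (Ici (-r)) :=
    hx.lipschitzOnWith hN (neg_nonpos.2 hr) hzero hsucc
  exact ⟨hconsistent, x, hx, hlip.continuousOn, hlip.dist_le_mul, hx.eqOn_zero,
    fun _ => hx.eq_add_integral hN hr hF hlip.continuousOn hxM hεr hεN hfix⟩

/-- given the inductively defined sequence `x_{m/2}` (each obtained from
the previous one by translation and by applying the Half-Stroboscopic fixed point on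
the last half-window) that remains bounded by `M`, the definition
`x(t) = x_{m/2}(t - m/2)` is consistent in `m` and yields a continuous ℓ-Lipschitz
global forward solution of `x'(t) = τ F (x (t - 1 + ε x t))` with history `x₀`. -/
theorem inductive_construction_global_solution
    (τ M ℓ ε ε₀ K₀ K₁ K₂ : ℝ) (F x₀ : ℝ → ℝ) (xs : ℕ → ℝ → ℝ)
    (hτ : 0 < τ) (hM : 1 < M) (hℓpos : 0 < ℓ)
    (hF : ContDiff ℝ 1 F)
    (hK₀ : K₀ = ⨆ ξ : Set.Icc (-M) M, |F ξ.1|)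
    (hK₁ : K₁ = ⨆ ξ : Set.Icc (-M) M, |deriv F ξ.1|)
    (hK₂ : K₂ = M + τ * K₀ / 2)
    (hℓ : τ * K₀ ≤ ℓ)
    (hε₀ : ε₀ = (if 0 < K₁ then min (1 / (2 * K₂)) (1 / (τ * ℓ * K₁)) else 1 / (2 * K₂)))
    (hε : |ε| ≤ ε₀)
    (hx₀ : memC (-(3 / 2)) 0 ℓ x₀)
    (hx₀M : ∀ t ∈ Set.Icc (-(3 / 2) : ℝ) 0, |x₀ t| ≤ M)
    (h0 : ∀ t : ℝ, xs 0 t = x₀ t)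
    (hshift : ∀ m : ℕ, 1 ≤ m →
      ∀ t ∈ Set.Icc (-(3 / 2) - (m : ℝ) / 2) (-(1 / 2) : ℝ),
        xs m t = xs (m - 1) (t + 1 / 2))
    (hfix : ∀ m : ℕ, 1 ≤ m →
      mem0 ℓ K₂ (xs (m - 1) 0) (fun s => xs m (s - 1 / 2)) ∧
      ∀ t ∈ Set.Icc (0 : ℝ) (1 / 2),
        xs m (t - 1 / 2) =
          xs (m - 1) 0 + τ * ∫ s in (0 : ℝ)..t, F (xs (m - 1) (s - 1 + ε * xs m (s - 1 / 2))))
    (hbd : ∀ m : ℕ, ∀ t ∈ Set.Icc (-(3 / 2) - (m : ℝ) / 2) (0 : ℝ), |xs m t| ≤ M) :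
    (∀ m n : ℕ, ∀ t : ℝ, t ∈ Set.Icc (-(3 / 2) : ℝ) ((m : ℝ) / 2) →
      t ∈ Set.Icc (-(3 / 2) : ℝ) ((n : ℝ) / 2) →
      xs m (t - (m : ℝ) / 2) = xs n (t - (n : ℝ) / 2)) ∧
    ∃ x : ℝ → ℝ,
      (∀ m : ℕ, ∀ t ∈ Set.Icc (-(3 / 2) : ℝ) ((m : ℝ) / 2), x t = xs m (t - (m : ℝ) / 2)) ∧
      ContinuousOn x (Set.Ici (-(3 / 2) : ℝ)) ∧
      (∀ s ∈ Set.Ici (-(3 / 2) : ℝ), ∀ t ∈ Set.Ici (-(3 / 2) : ℝ),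
        |x s - x t| ≤ ℓ * |s - t|) ∧
      (∀ t ∈ Set.Icc (-(3 / 2) : ℝ) 0, x t = x₀ t) ∧
      ∀ t : ℝ, 0 ≤ t →
        x t = x₀ 0 + τ * ∫ s in (0 : ℝ)..t, F (x (s - 1 + ε * x s)) := by
  obtain rfl : xs 0 = x₀ := funext h0
  have hεM : |ε| * M ≤ 1 / 2 := abs_mul_le_half (one_pos.trans hM) hτ.le
    (hK₀ ▸ Real.iSup_nonneg fun _ => abs_nonneg _) hK₂ (hε₀ ▸ hε)
  lift ℓ to ℝ≥0 using hℓpos.le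
  exact inductive_construction_global_solution_general two_pos hF.continuous (by linarith)
    (by linarith) hx₀.lipschitzOnWith (fun m => hshift (m + 1) m.succ_pos)
    (fun m => (hfix (m + 1) m.succ_pos).1.1.lipschitzOnWith)
    (fun m => (hfix (m + 1) m.succ_pos).2) hbd
end
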